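/- Let μ and μ̃ be Borel probability measures on X, p ≥ 1, k > 0, and let α ∈ (0, 1) be a constant. Set δ = ‖μ − μ̃‖_TV. Then min{ δ(1−α), (1/k)·W_{p,1−δ(1−α)}(μ, μ̃) } ≤ RPW_{p,k}(μ, μ̃) ≤ min{ δ, (1/k)·W_p(μ, μ̃) }. -/

import Mathlib

open MeasureTheory

noncomputable section

/-- `γ` is an `α`-partial transport plan from `μ` to `ν`: a Borel measure on `X × X` of
total mass `α` whose first marginal is dominated by `μ` and second marginal by `ν`. -/
def IsPartialPlan {X : Type*} [MeasurableSpace X] (μ ν : Measure X) (α : ℝ)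
    (γ : Measure (X × X)) : Prop :=
  γ Set.univ = ENNReal.ofReal α ∧ γ.map Prod.fst ≤ μ ∧ γ.map Prod.snd ≤ ν

/-- The cost `w_p(γ) = (∫ c(x,y)^p dγ)^(1/p)` of a transport plan. -/
def planCost {X : Type*} [MetricSpace X] [MeasurableSpace X] (p : ℝ)
    (γ : Measure (X × X)) : ℝ :=
  (∫ z, dist z.1 z.2 ^ p ∂γ) ^ (1 / p)

/-- The `α`-partial `p`-Wasserstein distance `W_{p,α}(μ, ν)`. -/
def partialW {X : Type*} [MetricSpace X] [MeasurableSpace X] (p α : ℝ)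
    (μ ν : Measure X) : ℝ :=
  sInf { c : ℝ | ∃ γ : Measure (X × X), IsPartialPlan μ ν α γ ∧ c = planCost p γ }

/-- The `(p,k)`-RPW distance: the least `ε ∈ [0,1]` with `W_{p,1-ε}(μ,ν) ≤ kε`. -/
def RPW {X : Type*} [MetricSpace X] [MeasurableSpace X] (p k : ℝ)
    (μ ν : Measure X) : ℝ :=
  sInf { ε : ℝ | ε ∈ Set.Icc (0:ℝ) 1 ∧ partialW p (1 - ε) μ ν ≤ k * ε }

/-- The total variation distance `‖μ − ν‖_TV = sup { |μ(A) − ν(A)| : A Borel }`. -/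
def TVdist {X : Type*} [MeasurableSpace X] (μ ν : Measure X) : ℝ :=
  sSup { r : ℝ | ∃ A : Set X, MeasurableSet A ∧ r = |(μ A).toReal - (ν A).toReal| }

/-!
The common part `μ ⊓ μt` of the two measures has mass `1 - δ`, and pushing it to the diagonal
transports that mass at zero cost; so `δ` is admissible in the infimum defining the RPW distance.
Scaling a plan down shows that `W_{p,α}` increases with `α`. Hence `W_{p,1-ε} ≤ W_{p,1}`, which
makes `W_{p,1} / k` admissible when it is at most `1`, while any admissible `ε` below a threshold
`t` satisfies `W_{p,1-t} ≤ W_{p,1-ε} ≤ k ε`, which gives the lower bound.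
-/

open scoped NNReal

section CommonPart

variable {X : Type*} [MeasurableSpace X] {μ ν : Measure X}

lemma inf_eq_restrict_add_restrict_compl {s : Set X} (hs : IsHahnDecomposition μ ν s) :
    μ ⊓ ν = μ.restrict s + ν.restrict sᶜ := by
  have hsm := hs.measurableSet
  refine le_antisymm ?_ (le_inf ?_ ?_)
  · calc μ ⊓ ν = (μ ⊓ ν).restrict s + (μ ⊓ ν).restrict sᶜ :=
          (Measure.restrict_add_restrict_compl hsm).symm
      _ ≤ μ.restrict s + ν.restrict sᶜ :=
          add_le_add (Measure.restrict_mono_measure inf_le_left s)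
            (Measure.restrict_mono_measure inf_le_right sᶜ)
  · calc μ.restrict s + ν.restrict sᶜ ≤ μ.restrict s + μ.restrict sᶜ :=
          add_le_add le_rfl hs.ge_on_compl
      _ = μ := Measure.restrict_add_restrict_compl hsm
  · calc μ.restrict s + ν.restrict sᶜ ≤ ν.restrict s + ν.restrict sᶜ :=
          add_le_add hs.le_on le_rfl
      _ = ν := Measure.restrict_add_restrict_compl hsm

lemma measureReal_inf_univ_le [IsFiniteMeasure μ] [IsFiniteMeasure ν] {A : Set X}
    (hA : MeasurableSet A) : (μ ⊓ ν).real Set.univ ≤ μ.real A + ν.real Aᶜ := by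
  have : IsFiniteMeasure (μ ⊓ ν) := isFiniteMeasure_of_le μ inf_le_left
  have hμ : (μ ⊓ ν) A ≤ μ A := (inf_le_left : μ ⊓ ν ≤ μ) A
  have hν : (μ ⊓ ν) Aᶜ ≤ ν Aᶜ := (inf_le_right : μ ⊓ ν ≤ ν) Aᶜ
  rw [← measureReal_add_measureReal_compl hA]
  exact add_le_add (ENNReal.toReal_mono (measure_ne_top μ A) hμ)
    (ENNReal.toReal_mono (measure_ne_top ν Aᶜ) hν)

lemma abs_measureReal_sub_le_TVdist [IsFiniteMeasure μ] [IsFiniteMeasure ν] {A : Set X}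
    (hA : MeasurableSet A) : |μ.real A - ν.real A| ≤ TVdist μ ν := by
  refine le_csSup ⟨μ.real Set.univ + ν.real Set.univ, ?_⟩ ⟨A, hA, rfl⟩
  rintro _ ⟨B, -, rfl⟩
  calc |μ.real B - ν.real B| ≤ |μ.real B| + |ν.real B| := abs_sub _ _
    _ = μ.real B + ν.real B := by simp only [abs_of_nonneg measureReal_nonneg]
    _ ≤ μ.real Set.univ + ν.real Set.univ :=
        add_le_add (measureReal_mono B.subset_univ) (measureReal_mono B.subset_univ)

lemma TVdist_nonneg : 0 ≤ TVdist μ ν := by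
  apply Real.sSup_nonneg
  rintro _ ⟨A, -, rfl⟩
  exact abs_nonneg _

lemma measureReal_inf_univ_eq_one_sub_TVdist [IsProbabilityMeasure μ] [IsProbabilityMeasure ν] :
    (μ ⊓ ν).real Set.univ = 1 - TVdist μ ν := by
  apply le_antisymm
  · suffices TVdist μ ν ≤ 1 - (μ ⊓ ν).real Set.univ by linarith
    refine csSup_le ⟨_, ∅, .empty, rfl⟩ ?_
    rintro _ ⟨A, hA, rfl⟩
    have hμν : (μ ⊓ ν).real Set.univ ≤ μ.real A + ν.real Aᶜ := measureReal_inf_univ_le hA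
    have hνμ : (μ ⊓ ν).real Set.univ ≤ μ.real Aᶜ + ν.real A := by
      simpa only [compl_compl] using measureReal_inf_univ_le (μ := μ) (ν := ν) hA.compl
    rw [probReal_compl_eq_one_sub hA] at hμν hνμ
    simp only [← measureReal_def]
    exact abs_sub_le_iff.2 ⟨by linarith, by linarith⟩
  · obtain ⟨s, hs⟩ := exists_isHahnDecomposition μ ν
    have hmass : (μ ⊓ ν).real Set.univ = μ.real s + (1 - ν.real s) := by
      rw [inf_eq_restrict_add_restrict_compl hs, measureReal_add_apply,
        measureReal_restrict_apply_univ, measureReal_restrict_apply_univ,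
        probReal_compl_eq_one_sub hs.measurableSet]
    have hs_le : |μ.real s - ν.real s| ≤ TVdist μ ν :=
      abs_measureReal_sub_le_TVdist hs.measurableSet
    linarith [neg_le_of_abs_le hs_le]

lemma TVdist_le_one [IsProbabilityMeasure μ] [IsProbabilityMeasure ν] : TVdist μ ν ≤ 1 :=
  sub_nonneg.1 (measureReal_inf_univ_eq_one_sub_TVdist (μ := μ) (ν := ν) ▸ measureReal_nonneg)

end CommonPart

namespace IsPartialPlan

variable {X : Type*} [MeasurableSpace X] {μ ν : Measure X}

lemma zero : IsPartialPlan μ ν 0 0 := by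
  simp [IsPartialPlan, Measure.zero_le]

lemma prod [IsProbabilityMeasure μ] [IsProbabilityMeasure ν] :
    IsPartialPlan μ ν 1 (μ.prod ν) := by
  simp [IsPartialPlan]

lemma smul {α : ℝ} {γ : Measure (X × X)} (h : IsPartialPlan μ ν α γ) {c : ℝ≥0} (hc : c ≤ 1) :
    IsPartialPlan μ ν (c * α) (c • γ) := by
  have smul_le_self (m : Measure X) : c • m ≤ m := fun s =>
    smul_le_of_le_one_left zero_le hc
  obtain ⟨hmass, hfst, hsnd⟩ := h
  refine ⟨?_, ?_, ?_⟩
  · rw [Measure.smul_apply, hmass, ENNReal.smul_def, smul_eq_mul,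
      ENNReal.ofReal_mul c.coe_nonneg, ENNReal.ofReal_coe_nnreal]
  · rw [Measure.map_smul]
    exact (smul_le_self _).trans hfst
  · rw [Measure.map_smul]
    exact (smul_le_self _).trans hsnd

lemma map_diag {η : Measure X} [IsFiniteMeasure η] (hμ : η ≤ μ) (hν : η ≤ ν) :
    IsPartialPlan μ ν (η.real Set.univ) (η.map Function.diag) := by
  have hfst : (η.map Function.diag).map Prod.fst = η := by
    rw [Measure.map_map measurable_fst measurable_diag]
    exact Measure.map_id
  have hsnd : (η.map Function.diag).map Prod.snd = η := by
    rw [Measure.map_map measurable_snd measurable_diag]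
    exact Measure.map_id
  refine ⟨?_, hfst.trans_le hμ, hsnd.trans_le hν⟩
  rw [Measure.map_apply measurable_diag .univ, Set.preimage_univ, ofReal_measureReal]

end IsPartialPlan

section PartialWasserstein

variable {X : Type*} [MetricSpace X] [MeasurableSpace X] {p : ℝ}

lemma planCost_nonneg (γ : Measure (X × X)) : 0 ≤ planCost p γ :=
  Real.rpow_nonneg (integral_nonneg fun _ => Real.rpow_nonneg dist_nonneg _) _

lemma planCost_zero (hp : p ≠ 0) : planCost p (0 : Measure (X × X)) = 0 := by
  simp [planCost, hp]

lemma planCost_smul (c : ℝ≥0) (γ : Measure (X × X)) :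
    planCost p (c • γ) = (c : ℝ) ^ (1 / p) * planCost p γ := by
  rw [planCost, integral_smul_nnreal_measure, NNReal.smul_def, smul_eq_mul,
    Real.mul_rpow c.coe_nonneg (integral_nonneg fun _ => Real.rpow_nonneg dist_nonneg _), planCost]

lemma planCost_map_diag [SecondCountableTopology X] [OpensMeasurableSpace X] (hp : p ≠ 0)
    (η : Measure X) : planCost p (η.map Function.diag) = 0 := by
  have hcost : Measurable fun z : X × X => dist z.1 z.2 ^ p :=
    (measurable_fst.dist measurable_snd).pow_const p
  rw [planCost, integral_map measurable_diag.aemeasurable hcost.aestronglyMeasurable]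
  simp [hp]

variable {μ ν : Measure X}

lemma partialW_nonneg {a : ℝ} : 0 ≤ partialW p a μ ν := by
  apply Real.sInf_nonneg
  rintro _ ⟨γ, -, rfl⟩
  exact planCost_nonneg γ

lemma partialW_le_planCost {a : ℝ} {γ : Measure (X × X)} (h : IsPartialPlan μ ν a γ) :
    partialW p a μ ν ≤ planCost p γ := by
  refine csInf_le ⟨0, ?_⟩ ⟨γ, h, rfl⟩
  rintro _ ⟨γ', -, rfl⟩
  exact planCost_nonneg γ'

lemma partialW_zero (hp : p ≠ 0) : partialW p 0 μ ν = 0 :=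
  ((partialW_le_planCost .zero).trans_eq (planCost_zero hp)).antisymm partialW_nonneg

lemma partialW_mul_le_planCost (hp : 0 ≤ p) {a : ℝ} {γ : Measure (X × X)}
    (h : IsPartialPlan μ ν a γ) {c : ℝ≥0} (hc : c ≤ 1) :
    partialW p (c * a) μ ν ≤ planCost p γ :=
  calc partialW p (c * a) μ ν ≤ planCost p (c • γ) := partialW_le_planCost (h.smul hc)
    _ = (c : ℝ) ^ (1 / p) * planCost p γ := planCost_smul c γ
    _ ≤ planCost p γ := mul_le_of_le_one_left (planCost_nonneg γ)
        (Real.rpow_le_one c.coe_nonneg hc (one_div_nonneg.2 hp))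

lemma partialW_mono [IsProbabilityMeasure μ] [IsProbabilityMeasure ν] (hp : 0 ≤ p) {a b : ℝ}
    (ha : 0 ≤ a) (hab : a ≤ b) (hb : b ≤ 1) : partialW p a μ ν ≤ partialW p b μ ν := by
  lift b to ℝ≥0 using ha.trans hab
  lift a to ℝ≥0 using ha
  norm_cast at hab hb
  have hplan : IsPartialPlan μ ν b (b • μ.prod ν) := by
    simpa only [mul_one] using IsPartialPlan.prod.smul hb
  refine le_csInf ⟨_, _, hplan, rfl⟩ ?_
  rintro _ ⟨γ, hγ, rfl⟩
  have hscale : a / b * b = a := div_mul_cancel_of_imp fun h => le_zero_iff.1 (h ▸ hab)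
  rw [← hscale, NNReal.coe_mul]
  exact partialW_mul_le_planCost hp hγ (div_le_one_of_le₀ hab zero_le)

lemma partialW_one_sub_TVdist [SecondCountableTopology X] [OpensMeasurableSpace X]
    [IsProbabilityMeasure μ] [IsProbabilityMeasure ν] (hp : p ≠ 0) :
    partialW p (1 - TVdist μ ν) μ ν = 0 := by
  have : IsFiniteMeasure (μ ⊓ ν) := isFiniteMeasure_of_le μ inf_le_left
  rw [← measureReal_inf_univ_eq_one_sub_TVdist]
  exact ((partialW_le_planCost (.map_diag inf_le_left inf_le_right)).trans_eq
    (planCost_map_diag hp _)).antisymm partialW_nonneg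

end PartialWasserstein

section RobustPartialWasserstein

variable {X : Type*} [MetricSpace X] [MeasurableSpace X] {μ ν : Measure X} {p k : ℝ}

lemma RPW_le {ε : ℝ} (hε : ε ∈ Set.Icc 0 1) (h : partialW p (1 - ε) μ ν ≤ k * ε) :
    RPW p k μ ν ≤ ε :=
  csInf_le ⟨0, fun _ h' => h'.1.1⟩ ⟨hε, h⟩

lemma RPW_le_one (hp : p ≠ 0) (hk : 0 ≤ k) : RPW p k μ ν ≤ 1 :=
  RPW_le (Set.right_mem_Icc.2 zero_le_one) (by simpa [partialW_zero hp])

lemma le_RPW (hp : p ≠ 0) (hk : 0 ≤ k) {r : ℝ}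
    (h : ∀ ε ∈ Set.Icc (0 : ℝ) 1, partialW p (1 - ε) μ ν ≤ k * ε → r ≤ ε) : r ≤ RPW p k μ ν :=
  le_csInf ⟨1, Set.right_mem_Icc.2 zero_le_one, by simpa [partialW_zero hp]⟩
    fun ε hε => h ε hε.1 hε.2

variable [IsProbabilityMeasure μ] [IsProbabilityMeasure ν]

lemma RPW_le_TVdist [SecondCountableTopology X] [OpensMeasurableSpace X] (hp : p ≠ 0)
    (hk : 0 ≤ k) : RPW p k μ ν ≤ TVdist μ ν :=
  RPW_le ⟨TVdist_nonneg, TVdist_le_one⟩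
    ((partialW_one_sub_TVdist hp).trans_le (mul_nonneg hk TVdist_nonneg))

lemma RPW_le_one_div_mul_partialW (hp : 0 < p) (hk : 0 < k) :
    RPW p k μ ν ≤ 1 / k * partialW p 1 μ ν := by
  obtain hlarge | hsmall := le_total 1 (1 / k * partialW p 1 μ ν)
  · exact (RPW_le_one hp.ne' hk.le).trans hlarge
  · have hnonneg : 0 ≤ 1 / k * partialW p 1 μ ν := mul_nonneg (by positivity) partialW_nonneg
    refine RPW_le ⟨hnonneg, hsmall⟩ ?_
    rw [← mul_assoc, mul_one_div_cancel hk.ne', one_mul]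
    exact partialW_mono hp.le (by linarith) (by linarith) le_rfl

lemma min_le_RPW (hp : 0 < p) (hk : 0 < k) {t : ℝ} (ht : t ≤ 1) :
    min t (1 / k * partialW p (1 - t) μ ν) ≤ RPW p k μ ν := by
  refine le_RPW hp.ne' hk.le fun ε ⟨hε₀, _⟩ hε => ?_
  obtain htε | hεt := le_total t ε
  · exact min_le_of_left_le htε
  · apply min_le_of_right_le
    rw [one_div, inv_mul_le_iff₀ hk]
    calc partialW p (1 - t) μ ν ≤ partialW p (1 - ε) μ ν :=
          partialW_mono hp.le (by linarith) (by linarith) (by linarith)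
      _ ≤ k * ε := hε

end RobustPartialWasserstein

theorem rpw_tv_sandwich_general
    {X : Type*} [MetricSpace X] [BoundedSpace X] [SecondCountableTopology X]
    [MeasurableSpace X] [OpensMeasurableSpace X]
    (μ ν : Measure X) [IsProbabilityMeasure μ] [IsProbabilityMeasure ν]
    {p k : ℝ} (hp : 0 < p) (hk : 0 < k) {t : ℝ} (ht : t ≤ 1) :
    min t (1 / k * partialW p (1 - t) μ ν) ≤ RPW p k μ ν ∧
    RPW p k μ ν ≤ min (TVdist μ ν) (1 / k * partialW p 1 μ ν) :=
  ⟨min_le_RPW hp hk ht, le_min (RPW_le_TVdist hp.ne' hk.le) (RPW_le_one_div_mul_partialW hp hk)⟩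

/-- With `δ = ‖μ − μ̃‖_TV` and `α ∈ (0,1)` a constant,
`min {δ(1−α), (1/k)·W_{p,1−δ(1−α)}(μ, μ̃)} ≤ RPW_{p,k}(μ, μ̃) ≤ min {δ, (1/k)·W_p(μ, μ̃)}`. -/
theorem rpw_tv_sandwich
    {X : Type*} [MetricSpace X] [CompactSpace X] [MeasurableSpace X] [BorelSpace X]
    (hdiam : ∀ a b : X, dist a b ≤ 1)
    (μ μt : Measure X) [IsProbabilityMeasure μ] [IsProbabilityMeasure μt]
    (p k : ℝ) (hp : 1 ≤ p) (hk : 0 < k)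
    (α : ℝ) (hα : α ∈ Set.Ioo (0:ℝ) 1)
    (δ : ℝ) (hδ : δ = TVdist μ μt) :
    min (δ * (1 - α)) ((1 / k) * partialW p (1 - δ * (1 - α)) μ μt) ≤ RPW p k μ μt ∧
    RPW p k μ μt ≤ min δ ((1 / k) * partialW p 1 μ μt) := by
  subst hδ
  exact rpw_tv_sandwich_general μ μt (by linarith) hk
    (mul_le_one₀ TVdist_le_one (by linarith [hα.2]) (by linarith [hα.1]))
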